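/- Let X be the one-point Lindelöfication of an uncountable discrete space D: explicitly, X = D ∪ {p} with p ∉ D, every point of D is isolated in X, and the open neighborhoods of p are exactly the sets {p} ∪ U where U ⊆ D and D \ U is countable. Then: (1) X is a charming space; (2) X is not a Lindelöf Σ-space; and (3) the product X × X (with the product topology) is not a charming space. -/

import Mathlib

open Set Function TopologicalSpace

universe u

/-- A map between topological spaces is *perfect* if it is continuous, closed, and
every fiber is compact. -/
def PerfectMap {Y : Type*} {Z : Type*} [TopologicalSpace Y] [TopologicalSpace Z]
    (f : Y → Z) : Prop :=
  Continuous f ∧ IsClosedMap f ∧ ∀ z : Z, IsCompact (f ⁻¹' {z})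

/-- A topological space `X` is a *Lindelöf Σ-space* if there exist a topological space `Y`,
a continuous surjection from `Y` onto `X`, and a perfect surjection from `Y` onto some
second-countable space. -/
def IsLindelofSigma (X : Type u) [TopologicalSpace X] : Prop :=
  ∃ (Y : Type u) (tY : TopologicalSpace Y) (Z : Type u) (tZ : TopologicalSpace Z),
    @SecondCountableTopology Z tZ ∧
    (∃ f : Y → X, @Continuous Y X tY _ f ∧ Surjective f) ∧
    (∃ g : Y → Z, @PerfectMap Y Z tY tZ g ∧ Surjective g)

/-- A topological space `X` is a *charming space* if there is a subset `Y` of `X` that is a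
Lindelöf Σ-space in the subspace topology and such that for every open `U ⊇ Y`,
the set `X \ U` is a Lindelöf Σ-space in the subspace topology. -/
def IsCharming (X : Type u) [TopologicalSpace X] : Prop :=
  ∃ Y : Set X, IsLindelofSigma Y ∧
    ∀ U : Set X, IsOpen U → Y ⊆ U → IsLindelofSigma ↥(Uᶜ)

/-- A *CL-charming* space: the shell `Y` can be chosen closed. -/
def IsCLCharming (X : Type u) [TopologicalSpace X] : Prop :=
  ∃ Y : Set X, IsClosed Y ∧ IsLindelofSigma Y ∧
    ∀ U : Set X, IsOpen U → Y ⊆ U → IsLindelofSigma ↥(Uᶜ)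

/-- A *CO-charming* space: the shell `Y` can be chosen compact. -/
def IsCOCharming (X : Type u) [TopologicalSpace X] : Prop :=
  ∃ Y : Set X, IsCompact Y ∧ IsLindelofSigma Y ∧
    ∀ U : Set X, IsOpen U → Y ⊆ U → IsLindelofSigma ↥(Uᶜ)

/-- A space has a *countable network* if there is a countable family `N` of subsets such that
every point in every open set `V` is contained in a member of `N` contained in `V`. -/
def HasCountableNetwork (X : Type u) [TopologicalSpace X] : Prop :=
  ∃ N : Set (Set X), N.Countable ∧
    ∀ x : X, ∀ V : Set X, IsOpen V → x ∈ V → ∃ n ∈ N, x ∈ n ∧ n ⊆ V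

/-- A topological space `X` is *weak (4,4)-structured* if there exist a topological space `Y`,
a continuous surjection from `Y` onto `X`, and a perfect surjection from `Y` onto some
charming space. -/
def IsWeak44Structured (X : Type u) [TopologicalSpace X] : Prop :=
  ∃ (Y : Type u) (tY : TopologicalSpace Y) (M : Type u) (tM : TopologicalSpace M),
    @IsCharming M tM ∧
    (∃ f : Y → X, @Continuous Y X tY _ f ∧ Surjective f) ∧
    (∃ g : Y → M, @PerfectMap Y M tY tM g ∧ Surjective g)

/-! In a space whose countable subsets are closed, compact sets are finite. A countable network
modulo compact sets then behaves like a countable network, so every Lindelöf Σ-subspace is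
countable, and conversely every countable space is Lindelöf Σ. Hence `X` is charming with shell
`{p}` but not Lindelöf Σ, while a countable shell in `X × X` misses an entire uncountable fiber
`{d} × X`. -/

/-- The property that every countable subset is closed, shared by all `T₁` P-spaces. -/
def CountableSetsClosed (X : Type*) [TopologicalSpace X] : Prop :=
  ∀ A : Set X, A.Countable → IsClosed A

/-- A family `N` of subsets is a *network modulo compact sets* if some cover of the space by
compact sets `K` is such that every open set containing `K` contains a member of `N` containing
`K`. The cover is encoded by the choice of one member `K` around each point. -/
def IsNetworkModCompacts {X : Type*} [TopologicalSpace X] (N : Set (Set X)) : Prop :=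
  ∀ x : X, ∃ K, IsCompact K ∧ x ∈ K ∧ ∀ V, IsOpen V → K ⊆ V → ∃ n ∈ N, K ⊆ n ∧ n ⊆ V

namespace CountableSetsClosed

variable {X Y : Type*} [TopologicalSpace X] [TopologicalSpace Y]

theorem of_continuous_injective (hY : CountableSetsClosed Y) {f : X → Y} (hf : Continuous f)
    (hinj : Injective f) : CountableSetsClosed X := fun A hA =>
  preimage_image_eq A hinj ▸ (hY _ (hA.image f)).preimage hf

theorem subtype (hX : CountableSetsClosed X) (S : Set X) : CountableSetsClosed S :=
  hX.of_continuous_injective continuous_subtype_val Subtype.val_injective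

theorem prod (hX : CountableSetsClosed X) (hY : CountableSetsClosed Y) :
    CountableSetsClosed (X × Y) := by
  intro A hA
  rw [← isOpen_compl_iff, isOpen_prod_iff]
  intro a b hab
  refine ⟨(Prod.fst '' A \ {a})ᶜ, (Prod.snd '' A \ {b})ᶜ,
    (hX _ ((hA.image _).mono sdiff_subset)).isOpen_compl,
    (hY _ ((hA.image _).mono sdiff_subset)).isOpen_compl, by simp, by simp, ?_⟩
  rintro ⟨x, y⟩ ⟨hx, hy⟩ hxy
  have hxa : x = a := by_contra fun h => hx ⟨mem_image_of_mem _ hxy, h⟩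
  have hyb : y = b := by_contra fun h => hy ⟨mem_image_of_mem _ hxy, h⟩
  exact hab (hxa ▸ hyb ▸ hxy)

theorem isDiscrete_of_countable (hX : CountableSetsClosed X) {A : Set X} (hA : A.Countable) :
    IsDiscrete A :=
  isDiscrete_iff_forall_mem_exists_isClosed.2 fun s hs =>
    ⟨s, hX s (hA.mono hs), inter_eq_left.2 hs⟩

theorem finite_of_isCompact (hX : CountableSetsClosed X) {K : Set X} (hK : IsCompact K) :
    K.Finite := by
  by_contra hinf
  obtain ⟨A, hAK, hA, hAinf⟩ := Set.Infinite.exists_subset_countable_infinite hinf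
  exact hAinf ((hK.of_isClosed_subset (hX A hA) hAK).finite (hX.isDiscrete_of_countable hA))

/-- Given `x ∈ K`, deleting from the space one point outside `K` of each member of the network not
contained in `K` leaves an open set containing `K`; a member of the network between `K` and this
open set must lie in `K`, hence is finite. So the finite members of the network cover the space. -/
theorem countable_of_isNetworkModCompacts (hX : CountableSetsClosed X) {N : Set (Set X)}
    (hN : IsNetworkModCompacts N) (hNc : N.Countable) : Countable X := by
  suffices h : ∀ x : X, ∃ n ∈ N, x ∈ n ∧ n.Finite by
    have hc : (⋃₀ {n ∈ N | n.Finite}).Countable :=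
      (hNc.mono (sep_subset _ _)).sUnion fun n hn => hn.2.countable
    refine countable_univ_iff.1 (hc.mono fun x _ => ?_)
    obtain ⟨n, hn, hxn, hfin⟩ := h x
    exact ⟨n, ⟨hn, hfin⟩, hxn⟩
  intro x
  obtain ⟨K, hK, hxK, hKN⟩ := hN x
  have : Nonempty X := ⟨x⟩
  choose! d hd using fun (n : Set X) (hnK : ¬ n ⊆ K) => not_subset.1 hnK
  let E : Set X := d '' {n ∈ N | ¬ n ⊆ K}
  have hE : IsClosed E := hX E ((hNc.mono (sep_subset _ _)).image d)
  have hKE : K ⊆ Eᶜ := by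
    rintro _ hdK ⟨n, hn, rfl⟩
    exact (hd n hn.2).2 hdK
  obtain ⟨n, hn, hKn, hnE⟩ := hKN Eᶜ hE.isOpen_compl hKE
  have hnK : n ⊆ K := by_contra fun h => hnE (hd n h).1 ⟨n, ⟨hn, h⟩, rfl⟩
  exact ⟨n, hn, hKn hxK, (hX.finite_of_isCompact hK).subset hnK⟩

end CountableSetsClosed

theorem IsLindelofSigma.exists_countable_isNetworkModCompacts {X : Type*} [TopologicalSpace X]
    (hX : IsLindelofSigma X) : ∃ N : Set (Set X), N.Countable ∧ IsNetworkModCompacts N := by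
  obtain ⟨Y, _, Z, _, _, ⟨f, hf, hfsurj⟩, g, ⟨-, hgclosed, hgfiber⟩, -⟩ := hX
  refine ⟨(fun B => f '' (g ⁻¹' B)) '' countableBasis Z, (countable_countableBasis Z).image _, ?_⟩
  intro x
  obtain ⟨y, rfl⟩ := hfsurj x
  refine ⟨f '' (g ⁻¹' {g y}), (hgfiber _).image hf, mem_image_of_mem f rfl, fun V hV hKV => ?_⟩
  have hopen : IsOpen (kernImage g (f ⁻¹' V)) :=
    isClosedMap_iff_kernImage.1 hgclosed (hV.preimage hf)
  have hmem : g y ∈ kernImage g (f ⁻¹' V) := fun y' hy' => hKV (mem_image_of_mem f hy')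
  obtain ⟨B, hB, hyB, hBV⟩ := (isBasis_countableBasis Z).exists_subset_of_mem_open hmem hopen
  refine ⟨_, mem_image_of_mem _ hB, image_mono (preimage_mono (singleton_subset_iff.2 hyB)), ?_⟩
  exact image_subset_iff.2 (subset_kernImage_iff.1 hBV)

theorem IsLindelofSigma.countable {X : Type*} [TopologicalSpace X] (h : IsLindelofSigma X)
    (hX : CountableSetsClosed X) : Countable X := by
  obtain ⟨N, hNc, hN⟩ := h.exists_countable_isNetworkModCompacts
  exact hX.countable_of_isNetworkModCompacts hN hNc

theorem IsLindelofSigma.of_countable (X : Type*) [TopologicalSpace X] [Countable X] :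
    IsLindelofSigma X := by
  let _ : TopologicalSpace X := ⊥
  have : DiscreteTopology X := ⟨rfl⟩
  exact ⟨X, ⊥, X, ⊥, inferInstance, ⟨id, continuous_bot, surjective_id⟩, id,
    ⟨continuous_id, IsClosedMap.id, fun z => by simp⟩, surjective_id⟩

theorem IsCharming.of_countable_shell {X : Type*} [TopologicalSpace X] {C : Set X}
    (hC : C.Countable) (hcompl : ∀ U, IsOpen U → C ⊆ U → (Uᶜ).Countable) : IsCharming X := by
  have := hC.to_subtype
  refine ⟨C, .of_countable C, fun U hU hCU => ?_⟩
  have := (hcompl U hU hCU).to_subtype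
  exact .of_countable _

theorem IsCharming.countable_or_countable_of_prod {X Y : Type*} [TopologicalSpace X]
    [TopologicalSpace Y] (h : IsCharming (X × Y)) (hX : CountableSetsClosed X)
    (hY : CountableSetsClosed Y) : Countable X ∨ Countable Y := by
  obtain ⟨S, hS, hSU⟩ := h
  rw [or_iff_not_imp_left, not_countable_iff]
  intro _
  have hScount : S.Countable := hS.countable ((hX.prod hY).subtype S)
  obtain ⟨d, hd⟩ : ∃ d, d ∉ Prod.fst '' S := (ne_univ_iff_exists_notMem _).1 fun h =>
    not_countable_univ (h ▸ hScount.image Prod.fst)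
  have hopen : IsOpen (Prod.fst ⁻¹' {d}ᶜ : Set (X × Y)) :=
    (hX _ (countable_singleton d)).isOpen_compl.preimage continuous_fst
  have hfiber : IsLindelofSigma ↥(Prod.fst ⁻¹' {d}ᶜ : Set (X × Y))ᶜ :=
    hSU _ hopen fun s hs hsd => hd ⟨s, hs, hsd⟩
  have : Countable ↥(Prod.fst ⁻¹' {d}ᶜ : Set (X × Y))ᶜ :=
    hfiber.countable ((hX.prod hY).subtype _)
  exact Injective.countable (f := fun y : Y => (⟨(d, y), by simp⟩ : ↥(Prod.fst ⁻¹' {d}ᶜ)ᶜ))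
    fun y y' hyy' => by simpa using hyy'

theorem one_point_lindelofication_charming_not_sigma_and_square_not_charming_general
    {X : Type*} [TopologicalSpace X] [Uncountable X] (hX : CountableSetsClosed X) {C : Set X}
    (hC : C.Countable) (hcompl : ∀ U, IsOpen U → C ⊆ U → (Uᶜ).Countable) :
    IsCharming X ∧ ¬ IsLindelofSigma X ∧ ¬ IsCharming (X × X) :=
  ⟨.of_countable_shell hC hcompl, fun h => not_countable (h.countable hX),
    fun h => (h.countable_or_countable_of_prod hX hX).elim not_countable not_countable⟩

/-- The one-point Lindelöfication `X = D ∪ {p}` of an uncountable discrete space is a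
charming space which is not a Lindelöf Σ-space, and whose square is not charming. -/
theorem one_point_lindelofication_charming_not_sigma_and_square_not_charming
    {X : Type u} [TopologicalSpace X] (p : X)
    (hopen : ∀ U : Set X, IsOpen U ↔ (p ∈ U → (Uᶜ : Set X).Countable))
    (huncountable : ¬ (({p}ᶜ : Set X)).Countable) :
    IsCharming X ∧ ¬ IsLindelofSigma X ∧ ¬ IsCharming (X × X) := by
  have hX : CountableSetsClosed X := fun A hA =>
    isOpen_compl_iff.1 <| (hopen _).2 fun _ => by rwa [compl_compl]
  have : Uncountable X := not_countable_iff.1 fun _ => huncountable (to_countable _)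
  exact one_point_lindelofication_charming_not_sigma_and_square_not_charming_general hX
    (countable_singleton p) fun U hU hpU => (hopen U).1 hU (hpU rfl)
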